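/- Every element y^m w of H^1 with m ≥ 0 and w a word in H^0 admits a unique representation y^m w = w0 + w1 ш̄ y + w2 ш̄ y^{ш̄2} + ⋯ + wm ш̄ y^{ш̄m} with w0, w1, …, wm ∈ H^0, where y^{ш̄i} denotes the i-fold n-shuffle product of y with itself; consequently (H^1, ш̄) is isomorphic to the polynomial algebra (H^0, ш̄)[y]. -/

import Mathlib

open scoped BigOperators

/-- The two-letter alphabet {x, y}. -/
inductive Letter : Type
  | x : Letter
  | y : Letter
deriving DecidableEq

/-- `H = ℚ⟨x,y⟩`, the noncommutative polynomial ring over ℚ in two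
indeterminates, realized as the monoid algebra of the free monoid on `{x,y}`. -/
abbrev H : Type := MonoidAlgebra ℚ (FreeMonoid Letter)

namespace H

/-- The monomial (word) of `H` corresponding to an element of the free monoid. -/
noncomputable def word (w : FreeMonoid Letter) : H := MonoidAlgebra.single w 1

/-- The generator `x`. -/
noncomputable def X : H := word (FreeMonoid.of Letter.x)

/-- The generator `y`. -/
noncomputable def Y : H := word (FreeMonoid.of Letter.y)

/-- The word `z_k = x^{k-1} y` (for `k ≥ 1`). -/
def zW (k : ℕ) : FreeMonoid Letter :=
  FreeMonoid.ofList (List.replicate (k - 1) Letter.x ++ [Letter.y])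

/-- `z_k = x^{k-1} y` as an element of `H`. -/
noncomputable def z (k : ℕ) : H := word (zW k)

/-- A list `[k₁,…,kₙ]` gives the word `z_{k₁} z_{k₂} ⋯ z_{kₙ}`. -/
def zListW (ks : List ℕ) : FreeMonoid Letter :=
  FreeMonoid.ofList (ks.flatMap fun k => List.replicate (k - 1) Letter.x ++ [Letter.y])

/-- `H¹ = ℚ + Hy` as a ℚ-submodule of `H`. -/
noncomputable def H1 : Submodule ℚ H :=
  LinearMap.range (LinearMap.mulRight ℚ Y) ⊔ Submodule.span ℚ {1}

/-- `H⁰ = ℚ + xHy` as a ℚ-submodule of `H`. -/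
noncomputable def H0 : Submodule ℚ H :=
  LinearMap.range ((LinearMap.mulRight ℚ Y).comp (LinearMap.mulLeft ℚ X)) ⊔
    Submodule.span ℚ {1}

/-- Parse a word of `H¹` into the exponent list of its `z`-decomposition:
`z_{k₁}⋯z_{kₙ} ↦ [k₁,…,kₙ]` (auxiliary accumulator version). -/
def toZAux : List Letter → ℕ → List ℕ
  | [], _ => []
  | Letter.x :: r, n => toZAux r (n + 1)
  | Letter.y :: r, n => (n + 1) :: toZAux r 0

/-- The `z`-decomposition of a word of `H¹`. -/
def toZ (w : FreeMonoid Letter) : List ℕ := toZAux (FreeMonoid.toList w) 0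

/-- The harmonic product on words of `H¹` (via `z`-decompositions):
`1 * w = w * 1 = w` and
`z_k w₁ * z_l w₂ = z_k (w₁ * z_l w₂) + z_l (z_k w₁ * w₂) + z_{k+l} (w₁ * w₂)`. -/
noncomputable def harmW : List ℕ → List ℕ → H
  | [], w => word (zListW w)
  | k :: w1, [] => word (zListW (k :: w1))
  | k :: w1, l :: w2 =>
      z k * harmW w1 (l :: w2) + z l * harmW (k :: w1) w2 + z (k + l) * harmW w1 w2
termination_by w1 w2 => w1.length + w2.length
decreasing_by all_goals simp [Nat.lt_succ_iff] <;> omega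

/-- The n-harmonic product on words of `H¹`:
`1 *̄ w = w *̄ 1 = w` and
`z_k w₁ *̄ z_l w₂ = z_k (w₁ *̄ z_l w₂) + z_l (z_k w₁ *̄ w₂) − z_{k+l} (w₁ *̄ w₂)`. -/
noncomputable def nharmW : List ℕ → List ℕ → H
  | [], w => word (zListW w)
  | k :: w1, [] => word (zListW (k :: w1))
  | k :: w1, l :: w2 =>
      z k * nharmW w1 (l :: w2) + z l * nharmW (k :: w1) w2 - z (k + l) * nharmW w1 w2
termination_by w1 w2 => w1.length + w2.length
decreasing_by all_goals simp [Nat.lt_succ_iff] <;> omega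

/-- The harmonic product `*` on `H¹`, extended ℚ-bilinearly. -/
noncomputable def harm (a b : H) : H :=
  Finsupp.sum a.coeff fun w1 c1 =>
    Finsupp.sum b.coeff fun w2 c2 => (c1 * c2) • harmW (toZ w1) (toZ w2)

/-- The n-harmonic product `*̄` on `H¹`, extended ℚ-bilinearly. -/
noncomputable def nharm (a b : H) : H :=
  Finsupp.sum a.coeff fun w1 c1 =>
    Finsupp.sum b.coeff fun w2 c2 => (c1 * c2) • nharmW (toZ w1) (toZ w2)

/-- The letter exchange `τ(x) = y`, `τ(y) = x`. -/
def τ : Letter → Letter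
  | Letter.x => Letter.y
  | Letter.y => Letter.x

/-- `δ(w) = 1` if `w` is the empty word, `0` otherwise. -/
def δ : List Letter → ℚ
  | [] => 1
  | _ :: _ => 0

/-- The shuffle product on words:
`1 ш w = w ш 1 = w` and `u₁w₁ ш u₂w₂ = u₁(w₁ ш u₂w₂) + u₂(u₁w₁ ш w₂)`. -/
noncomputable def shW : List Letter → List Letter → H
  | [], w => word (FreeMonoid.ofList w)
  | u :: w, [] => word (FreeMonoid.ofList (u :: w))
  | u1 :: w1, u2 :: w2 =>
      word (FreeMonoid.of u1) * shW w1 (u2 :: w2) +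
        word (FreeMonoid.of u2) * shW (u1 :: w1) w2
termination_by w1 w2 => w1.length + w2.length
decreasing_by all_goals simp [Nat.lt_succ_iff]

/-- The n-shuffle product on words: `1 ш̄ w = w ш̄ 1 = w` and
`u₁w₁ ш̄ u₂w₂ = u₁(w₁ ш̄ u₂w₂) + u₂(u₁w₁ ш̄ w₂) − δ(w₁)τ(u₁)u₂w₂ − δ(w₂)τ(u₂)u₁w₁`. -/
noncomputable def nshW : List Letter → List Letter → H
  | [], w => word (FreeMonoid.ofList w)
  | u :: w, [] => word (FreeMonoid.ofList (u :: w))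
  | u1 :: w1, u2 :: w2 =>
      word (FreeMonoid.of u1) * nshW w1 (u2 :: w2) +
        word (FreeMonoid.of u2) * nshW (u1 :: w1) w2 -
        δ w1 • word (FreeMonoid.ofList (τ u1 :: u2 :: w2)) -
        δ w2 • word (FreeMonoid.ofList (τ u2 :: u1 :: w1))
termination_by w1 w2 => w1.length + w2.length
decreasing_by all_goals simp [Nat.lt_succ_iff]

/-- The shuffle product `ш` on `H`, extended ℚ-bilinearly. -/
noncomputable def sh (a b : H) : H :=
  Finsupp.sum a.coeff fun w1 c1 =>
    Finsupp.sum b.coeff fun w2 c2 =>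
      (c1 * c2) • shW (FreeMonoid.toList w1) (FreeMonoid.toList w2)

/-- The n-shuffle product `ш̄` on `H`, extended ℚ-bilinearly. -/
noncomputable def nsh (a b : H) : H :=
  Finsupp.sum a.coeff fun w1 c1 =>
    Finsupp.sum b.coeff fun w2 c2 =>
      (c1 * c2) • nshW (FreeMonoid.toList w1) (FreeMonoid.toList w2)

/-- `S₁`: the ℚ-algebra endomorphism of `H` with `S₁(x) = x`, `S₁(y) = x + y`. -/
noncomputable def S1 : H →ₐ[ℚ] H :=
  MonoidAlgebra.lift ℚ H (FreeMonoid Letter)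
    (FreeMonoid.lift fun u => match u with
      | Letter.x => X
      | Letter.y => X + Y)

/-- `S₂`: the ℚ-algebra endomorphism of `H` with `S₂(x) = x`, `S₂(y) = y − x`. -/
noncomputable def S2 : H →ₐ[ℚ] H :=
  MonoidAlgebra.lift ℚ H (FreeMonoid Letter)
    (FreeMonoid.lift fun u => match u with
      | Letter.x => X
      | Letter.y => Y - X)

/-- `S` on a word: `S(1) = 1` and `S(Fy) = S₁(F)y`. -/
noncomputable def SW (w : FreeMonoid Letter) : H :=
  match (FreeMonoid.toList w).getLast? with
  | some Letter.y =>
      S1 (word (FreeMonoid.ofList (FreeMonoid.toList w).dropLast)) * Y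
  | _ => word w

/-- The ℚ-linear map `S : H¹ → H¹` with `S(1) = 1`, `S(Fy) = S₁(F)y`. -/
noncomputable def S (a : H) : H := Finsupp.sum a.coeff fun w c => c • SW w

/-- `S̃` on a word: `S̃(1) = 1` and `S̃(Fy) = S₂(F)y`. -/
noncomputable def StW (w : FreeMonoid Letter) : H :=
  match (FreeMonoid.toList w).getLast? with
  | some Letter.y =>
      S2 (word (FreeMonoid.ofList (FreeMonoid.toList w).dropLast)) * Y
  | _ => word w

/-- The ℚ-linear map `S̃ : H¹ → H¹` with `S̃(1) = 1`, `S̃(Fy) = S₂(F)y`. -/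
noncomputable def St (a : H) : H := Finsupp.sum a.coeff fun w c => c • StW w

/-- The multiple zeta value `ζ(k₁,…,kₙ)`: the sum over strictly decreasing
tuples `m₁ > m₂ > ⋯ > mₙ > 0` of `1/(m₁^{k₁}⋯mₙ^{kₙ})`. -/
noncomputable def mzeta (ks : List ℕ) : ℝ :=
  ∑' m : {f : Fin ks.length → ℕ // (∀ i, 0 < f i) ∧
      ∀ i j : Fin ks.length, i < j → f j < f i},
    ∏ i : Fin ks.length, ((m.1 i : ℝ) ^ ks.get i)⁻¹

/-- The non-strict multiple zeta value `ζ̄(k₁,…,kₙ)`: the sum over weakly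
decreasing tuples `m₁ ≥ m₂ ≥ ⋯ ≥ mₙ > 0` of `1/(m₁^{k₁}⋯mₙ^{kₙ})`. -/
noncomputable def nmzeta (ks : List ℕ) : ℝ :=
  ∑' m : {f : Fin ks.length → ℕ // (∀ i, 0 < f i) ∧
      ∀ i j : Fin ks.length, i ≤ j → f j ≤ f i},
    ∏ i : Fin ks.length, ((m.1 i : ℝ) ^ ks.get i)⁻¹

/-- The evaluation map `Z : H⁰ → ℝ`, `Z(1) = 1`,
`Z(z_{k₁}⋯z_{kₙ}) = ζ(k₁,…,kₙ)` (extended ℚ-linearly to `H`). -/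
noncomputable def Z (a : H) : ℝ := Finsupp.sum a.coeff fun w c => (c : ℝ) * mzeta (toZ w)

/-- The n-evaluation map `Z̄ : H⁰ → ℝ`, `Z̄(1) = 1`,
`Z̄(z_{k₁}⋯z_{kₙ}) = ζ̄(k₁,…,kₙ)` (extended ℚ-linearly to `H`). -/
noncomputable def Zbar (a : H) : ℝ := Finsupp.sum a.coeff fun w c => (c : ℝ) * nmzeta (toZ w)

/-- `i`-fold n-harmonic power: `a^{*̄ 0} = 1`, `a^{*̄ (i+1)} = a *̄ a^{*̄ i}`. -/
noncomputable def nharmPow : ℕ → H → H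
  | 0, _ => 1
  | i + 1, a => nharm a (nharmPow i a)

/-- `i`-fold n-shuffle power: `a^{ш̄ 0} = 1`, `a^{ш̄ (i+1)} = a ш̄ a^{ш̄ i}`. -/
noncomputable def nshPow : ℕ → H → H
  | 0, _ => 1
  | i + 1, a => nsh a (nshPow i a)

end H

open H

/-!
Filter `H¹` by `Fₘ = H⁰ ⊕ yH⁰ ⊕ ⋯ ⊕ yᵐ⁻¹H⁰`. Since `xHy ⊆ H⁰`, the recursion defining `ш̄`
gives, modulo `H⁰`, the congruences `c ш̄ yb ≡ y(c ш̄ b)` for `c ∈ H⁰` and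
`y ш̄ yb ≡ y(yb + y ш̄ b)`. By induction `y^{ш̄ k} ≡ k! yᵏ` and `c ш̄ y^{ш̄ k} ≡ k! yᵏc`
modulo `Fₖ`, so the map `c ↦ c ш̄ y^{ш̄ k}` identifies `H⁰` with `Fₖ₊₁ / Fₖ`, and the
coefficients are found one at a time from the top.
-/

theorem existsUnique_sum_of_existsUnique_smodEq {R V ι : Type*} [Ring R] [AddCommGroup V]
    [Module R V] {F : ℕ → Submodule R V} {C : Set ι} {φ : ℕ → ι → V} (hF : Monotone F)
    (hF_zero : F 0 = ⊥) (hφ : ∀ k, ∀ c ∈ C, φ k c ∈ F (k + 1))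
    (hφ_unique : ∀ k, ∀ f ∈ F (k + 1), ∃! c, c ∈ C ∧ f ≡ φ k c [SMOD F k])
    (m : ℕ) {f : V} (hf : f ∈ F m) :
    ∃! c : Fin m → ι, (∀ i, c i ∈ C) ∧ f = ∑ i : Fin m, φ i (c i) := by
  induction m generalizing f with
  | zero =>
    obtain rfl : f = 0 := by simpa [hF_zero] using hf
    exact ⟨Fin.elim0, by simp, fun _ _ => Subsingleton.elim _ _⟩
  | succ m ih =>
    obtain ⟨top, ⟨htop, hf_top⟩, htop_unique⟩ := hφ_unique m f hf
    obtain ⟨low, ⟨hlow, hf_low⟩, hlow_unique⟩ := ih (SModEq.sub_mem.1 hf_top)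
    refine ⟨Fin.snoc low top, ⟨?_, ?_⟩, ?_⟩
    · simpa [Fin.forall_fin_succ'] using ⟨hlow, htop⟩
    · simp [Fin.sum_univ_castSucc, ← hf_low]
    · rintro d ⟨hd, hf_d⟩
      rw [Fin.sum_univ_castSucc, ← sub_eq_iff_eq_add] at hf_d
      have hd_low : ∑ i : Fin m, φ i (d i.castSucc) ∈ F m :=
        Submodule.sum_mem _ fun i _ => hF i.isLt (hφ _ _ (hd _))
      have hd_last : d (Fin.last m) = top :=
        htop_unique _ ⟨hd _, SModEq.sub_mem.2 (hf_d ▸ hd_low)⟩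
      have hd_init : Fin.init d = low :=
        hlow_unique _ ⟨fun _ => hd _, by rw [← hd_last]; exact hf_d⟩
      rw [← hd_init, ← hd_last, Fin.snoc_init_self]

namespace H

theorem word_mul_word (v w : FreeMonoid Letter) : word v * word w = word (v * w) := by
  simp [word, MonoidAlgebra.single_mul_single]

theorem Y_pow_eq_word (m : ℕ) :
    Y ^ m = word (FreeMonoid.ofList (List.replicate m Letter.y)) := by
  induction m with
  | zero => rfl
  | succ m ih => rw [pow_succ', ih]; exact word_mul_word _ _

@[elab_as_elim]
theorem word_induction {p : H → Prop} (a : H) (word : ∀ w, p (word w))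
    (add : ∀ a b, p a → p b → p (a + b)) (smul : ∀ (q : ℚ) (a), p a → p (q • a)) : p a :=
  MonoidAlgebra.induction_on a word add smul

/-- The n-shuffle product `nsh` as a bilinear map, from which its linearity in each argument is
read off. -/
noncomputable def nshHom : H →ₗ[ℚ] H →ₗ[ℚ] H :=
  Finsupp.linearCombination ℚ (fun v => Finsupp.linearCombination ℚ
      (fun w => nshW (FreeMonoid.toList v) (FreeMonoid.toList w)) ∘ₗ
      (MonoidAlgebra.coeffLinearEquiv ℚ).toLinearMap) ∘ₗ
    (MonoidAlgebra.coeffLinearEquiv ℚ).toLinearMap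

theorem nshHom_apply (a b : H) : nshHom a b = nsh a b := by
  simp [nshHom, nsh, Finsupp.linearCombination_apply, Finsupp.sum, Finset.smul_sum, smul_smul]

theorem nsh_add_left (a a' b : H) : nsh (a + a') b = nsh a b + nsh a' b := by
  simp only [← nshHom_apply, LinearMap.map_add₂]

theorem nsh_add_right (a b b' : H) : nsh a (b + b') = nsh a b + nsh a b' := by
  simp only [← nshHom_apply, map_add]

theorem nsh_sub_right (a b b' : H) : nsh a (b - b') = nsh a b - nsh a b' := by
  simp only [← nshHom_apply, map_sub]

theorem nsh_smul_left (q : ℚ) (a b : H) : nsh (q • a) b = q • nsh a b := by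
  simp only [← nshHom_apply, LinearMap.map_smul₂]

theorem nsh_smul_right (q : ℚ) (a b : H) : nsh a (q • b) = q • nsh a b := by
  simp only [← nshHom_apply, map_smul]

theorem nsh_zero_right (a : H) : nsh a 0 = 0 := by
  simp only [← nshHom_apply, map_zero]

theorem nsh_word_word (v w : FreeMonoid Letter) :
    nsh (word v) (word w) = nshW (FreeMonoid.toList v) (FreeMonoid.toList w) := by
  simp [nsh, word, MonoidAlgebra.coeff_single, Finsupp.sum_single_index]

theorem nshW_nil_right (w : List Letter) : nshW w [] = word (FreeMonoid.ofList w) := by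
  cases w <;> rw [nshW]

theorem nshW_comm (v w : List Letter) : nshW v w = nshW w v := by
  fun_induction nshW v w with
  | case1 w => rw [nshW_nil_right]
  | case2 u v => rw [nshW]
  | case3 u v u' w ih ih' => rw [nshW, ih, ih']; abel

theorem nsh_comm (a b : H) : nsh a b = nsh b a := by
  induction a using word_induction with
  | word v =>
    induction b using word_induction with
    | word w => rw [nsh_word_word, nsh_word_word, nshW_comm]
    | add b b' hb hb' => rw [nsh_add_right, nsh_add_left, hb, hb']
    | smul q b hb => rw [nsh_smul_right, nsh_smul_left, hb]
  | add a a' ha ha' => rw [nsh_add_left, nsh_add_right, ha, ha']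
  | smul q a ha => rw [nsh_smul_left, nsh_smul_right, ha]

theorem nsh_one_right (a : H) : nsh a 1 = a := by
  induction a using word_induction with
  | word v => exact (nsh_word_word v 1).trans (nshW_nil_right _)
  | add a a' ha ha' => rw [nsh_add_left, ha, ha']
  | smul q a ha => rw [nsh_smul_left, ha]

theorem nsh_one_left (a : H) : nsh 1 a = a := by
  rw [nsh_comm, nsh_one_right]

theorem coeff_one_word (w : FreeMonoid Letter) :
    (word w).coeff 1 = δ (FreeMonoid.toList w) := by
  cases w <;> simp [word, MonoidAlgebra.coeff_single, δ]

theorem nsh_letter_mul_letter_mul (u v : Letter) (a b : H) :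
    nsh (word (.of u) * a) (word (.of v) * b) =
      word (.of u) * nsh a (word (.of v) * b) + word (.of v) * nsh (word (.of u) * a) b -
        a.coeff 1 • (word (.of (τ u)) * (word (.of v) * b)) -
        b.coeff 1 • (word (.of (τ v)) * (word (.of u) * a)) := by
  induction a using word_induction with
  | word s =>
    induction b using word_induction with
    | word t =>
      simp only [word_mul_word, nsh_word_word, coeff_one_word, FreeMonoid.toList_of_mul]
      rw [nshW]
      rfl
    | add b b' hb hb' =>
      simp only [mul_add, nsh_add_right, hb, hb', MonoidAlgebra.coeff_add, Finsupp.add_apply]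
      module
    | smul q b hb =>
      simp only [mul_smul_comm, nsh_smul_right, hb, MonoidAlgebra.coeff_smul, Finsupp.smul_apply]
      module
  | add a a' ha ha' =>
    simp only [mul_add, nsh_add_left, ha, ha', MonoidAlgebra.coeff_add, Finsupp.add_apply]
    module
  | smul q a ha =>
    simp only [mul_smul_comm, nsh_smul_left, ha, MonoidAlgebra.coeff_smul, Finsupp.smul_apply]
    module

/-- The left ideal `Hy` of `H`, so that `H¹ = ℚ + Hy` and `H⁰ = ℚ + x(Hy)`; being an ideal, it
absorbs the correction terms of the n-shuffle recursion. -/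
noncomputable abbrev Hy : Ideal H := Ideal.span {Y}

theorem nsh_letter_mul_letter_mul_mem {I : Ideal H} (u v : Letter) {a b : H}
    (hua : word (.of u) * a ∈ I) (hvb : word (.of v) * b ∈ I)
    (ha : nsh a (word (.of v) * b) ∈ I) (hb : nsh (word (.of u) * a) b ∈ I) :
    nsh (word (.of u) * a) (word (.of v) * b) ∈ I := by
  rw [nsh_letter_mul_letter_mul]
  refine I.sub_mem (I.sub_mem (I.add_mem ?_ ?_) ?_) ?_
  · exact I.mul_mem_left _ ha
  · exact I.mul_mem_left _ hb
  · exact Submodule.smul_of_tower_mem I _ (I.mul_mem_left _ hvb)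
  · exact Submodule.smul_of_tower_mem I _ (I.mul_mem_left _ hua)

theorem mul_Y_mem_Hy (a : H) : a * Y ∈ Hy :=
  Ideal.mem_span_singleton'.2 ⟨a, rfl⟩

theorem Y_mem_Hy : Y ∈ Hy :=
  Ideal.mem_span_singleton_self Y

theorem nsh_Y_letter_mul_mem_Hy (u : Letter) {b : H} (hub : word (.of u) * b ∈ Hy)
    (hb : nsh Y b ∈ Hy) : nsh Y (word (.of u) * b) ∈ Hy := by
  have Y_eq : Y = word (.of .y) * 1 := (mul_one Y).symm
  rw [Y_eq] at hb ⊢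
  exact nsh_letter_mul_letter_mul_mem .y u (Y_eq ▸ Y_mem_Hy) hub (by rwa [nsh_one_left]) hb

theorem nsh_Y_word_mul_Y_mem_Hy (w : FreeMonoid Letter) : nsh Y (word w * Y) ∈ Hy := by
  induction w using FreeMonoid.inductionOn' with
  | one =>
    have h := nsh_Y_letter_mul_mem_Hy .y (b := 1) (by rw [mul_one]; exact Y_mem_Hy)
      (by rw [nsh_one_right]; exact Y_mem_Hy)
    rw [mul_one] at h
    exact (one_mul Y).symm ▸ h
  | of_mul u w ih =>
    rw [← word_mul_word, mul_assoc]
    exact nsh_Y_letter_mul_mem_Hy u (Hy.mul_mem_left _ (mul_Y_mem_Hy _)) ih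

theorem nsh_word_mul_Y_mem_Hy (v w : FreeMonoid Letter) :
    nsh (word v * Y) (word w * Y) ∈ Hy := by
  have one_mul_Y : word 1 * Y = Y := one_mul Y
  induction v using FreeMonoid.inductionOn' generalizing w with
  | one => rw [one_mul_Y]; exact nsh_Y_word_mul_Y_mem_Hy w
  | of_mul u v ihv =>
    induction w using FreeMonoid.inductionOn' with
    | one => rw [one_mul_Y, nsh_comm]; exact nsh_Y_word_mul_Y_mem_Hy _
    | of_mul u' w ihw =>
      have hv := ihv (.of u' * w)
      simp only [← word_mul_word, mul_assoc] at hv ihw ⊢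
      exact nsh_letter_mul_letter_mul_mem _ _ (Hy.mul_mem_left _ (mul_Y_mem_Hy _))
        (Hy.mul_mem_left _ (mul_Y_mem_Hy _)) hv ihw

theorem nsh_mem_Hy {a b : H} (ha : a ∈ Hy) (hb : b ∈ Hy) : nsh a b ∈ Hy := by
  obtain ⟨a, rfl⟩ := Ideal.mem_span_singleton'.1 ha
  obtain ⟨b, rfl⟩ := Ideal.mem_span_singleton'.1 hb
  clear ha hb
  induction a using word_induction with
  | word v =>
    induction b using word_induction with
    | word w => exact nsh_word_mul_Y_mem_Hy v w
    | add b b' hb hb' => rw [add_mul, nsh_add_right]; exact Hy.add_mem hb hb'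
    | smul q b hb =>
      rw [smul_mul_assoc, nsh_smul_right]
      exact Submodule.smul_of_tower_mem Hy q hb
  | add a a' ha ha' => rw [add_mul, nsh_add_left]; exact Hy.add_mem ha ha'
  | smul q a ha =>
    rw [smul_mul_assoc, nsh_smul_left]
    exact Submodule.smul_of_tower_mem Hy q ha

theorem mem_H1_iff {b : H} : b ∈ H1 ↔ ∃ a ∈ Hy, ∃ q : ℚ, a + q • 1 = b := by
  simp only [H1, Submodule.mem_sup, LinearMap.mem_range, Submodule.mem_span_singleton,
    smul_eq_mul, LinearMap.mulRight_apply, exists_exists_eq_and]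

theorem mem_H0_iff {c : H} : c ∈ H0 ↔ ∃ a ∈ Hy, ∃ q : ℚ, X * a + q • 1 = c := by
  simp only [H0, Submodule.mem_sup, LinearMap.mem_range, Submodule.mem_span_singleton,
    smul_eq_mul, LinearMap.comp_apply, LinearMap.mulLeft_apply, LinearMap.mulRight_apply,
    mul_assoc, exists_exists_eq_and]

theorem one_mem_H0 : (1 : H) ∈ H0 :=
  mem_H0_iff.2 ⟨0, Hy.zero_mem, 1, by simp⟩

theorem X_mul_mem_H0 {a : H} (ha : a ∈ Hy) : X * a ∈ H0 :=
  mem_H0_iff.2 ⟨a, ha, 0, by simp⟩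

theorem H0_le_H1 : H0 ≤ H1 := by
  intro c hc
  obtain ⟨a, ha, q, rfl⟩ := mem_H0_iff.1 hc
  exact mem_H1_iff.2 ⟨X * a, Hy.mul_mem_left _ ha, q, rfl⟩

theorem Y_mul_mem_Hy {b : H} (hb : b ∈ H1) : Y * b ∈ Hy := by
  obtain ⟨a, ha, q, rfl⟩ := mem_H1_iff.1 hb
  rw [mul_add, mul_smul_comm, mul_one]
  exact Hy.add_mem (Hy.mul_mem_left _ ha)
    (Submodule.smul_of_tower_mem Hy q Y_mem_Hy)

theorem Y_mul_mem_H1 {b : H} (hb : b ∈ H1) : Y * b ∈ H1 :=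
  mem_H1_iff.2 ⟨Y * b, Y_mul_mem_Hy hb, 0, by simp⟩

theorem Y_pow_mem_H1 (k : ℕ) : Y ^ k ∈ H1 := by
  induction k with
  | zero => exact H0_le_H1 one_mem_H0
  | succ k ih => rw [pow_succ']; exact Y_mul_mem_H1 ih

theorem coeff_one_eq_zero_of_mem_Hy {a : H} (ha : a ∈ Hy) : a.coeff 1 = 0 := by
  obtain ⟨a, rfl⟩ := Ideal.mem_span_singleton'.1 ha
  exact MonoidAlgebra.coeff_mul_single_of_forall_mul_ne _ _ fun w h => by
    simpa using congrArg FreeMonoid.length h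

theorem nsh_mem_H0 {c d : H} (hc : c ∈ H0) (hd : d ∈ H0) : nsh c d ∈ H0 := by
  obtain ⟨a, ha, q, rfl⟩ := mem_H0_iff.1 hc
  obtain ⟨b, hb, r, rfl⟩ := mem_H0_iff.1 hd
  have hab : nsh (X * a) (X * b) ∈ H0 := by
    have hXX : nsh (X * a) (X * b) = X * (nsh a (X * b) + nsh (X * a) b) := by
      have := nsh_letter_mul_letter_mul .x .x a b
      rwa [coeff_one_eq_zero_of_mem_Hy ha, coeff_one_eq_zero_of_mem_Hy hb, zero_smul, zero_smul,
        sub_zero, sub_zero, ← mul_add] at this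
    rw [hXX]
    exact X_mul_mem_H0 (Hy.add_mem (nsh_mem_Hy ha (Hy.mul_mem_left _ hb))
      (nsh_mem_Hy (Hy.mul_mem_left _ ha) hb))
  rw [nsh_add_right, nsh_add_left, nsh_smul_left, nsh_smul_right, nsh_one_left, nsh_one_right]
  exact H0.add_mem (H0.add_mem hab (H0.smul_mem _ (X_mul_mem_H0 hb))) (H0.smul_mem _ hc)

theorem nsh_Y_mul_smodEq {c b : H} (hc : c ∈ H0) (hb : b ∈ H1) :
    nsh c (Y * b) ≡ Y * nsh c b [SMOD H0] := by
  obtain ⟨a, ha, q, rfl⟩ := mem_H0_iff.1 hc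
  have hXY : nsh (X * a) (Y * b) = X * nsh a (Y * b) + Y * nsh (X * a) b -
      b.coeff 1 • (X * (X * a)) := by
    have := nsh_letter_mul_letter_mul .x .y a b
    rwa [coeff_one_eq_zero_of_mem_Hy ha, zero_smul, sub_zero] at this
  have hsub : nsh (X * a + q • 1) (Y * b) - Y * nsh (X * a + q • 1) b =
      X * nsh a (Y * b) - b.coeff 1 • (X * (X * a)) := by
    simp only [nsh_add_left, nsh_smul_left, nsh_one_left, hXY, mul_add, mul_smul_comm]
    abel
  rw [SModEq.sub_mem, hsub]
  exact H0.sub_mem (X_mul_mem_H0 (nsh_mem_Hy ha (Y_mul_mem_Hy hb)))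
    (H0.smul_mem _ (X_mul_mem_H0 (Hy.mul_mem_left _ ha)))

theorem nsh_Y_smodEq {c : H} (hc : c ∈ H0) : nsh Y c ≡ Y * c [SMOD H0] := by
  simpa [nsh_one_right, nsh_comm] using nsh_Y_mul_smodEq hc (H0_le_H1 one_mem_H0)

theorem nsh_Y_Y_mul_smodEq {b : H} (hb : b ∈ H1) :
    nsh Y (Y * b) ≡ Y * (Y * b + nsh Y b) [SMOD H0] := by
  have hYY : nsh Y (Y * b) =
      Y * (Y * b + nsh Y b) - X * (Y * b) - b.coeff 1 • (X * Y) := by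
    have := nsh_letter_mul_letter_mul .y .y 1 b
    rwa [nsh_one_left, mul_one, ← mul_add, MonoidAlgebra.coeff_one_one, one_smul] at this
  rw [hYY, sub_sub]
  refine SModEq.sub_mem.2 ?_
  rw [sub_sub_cancel_left]
  exact H0.neg_mem (H0.add_mem (X_mul_mem_H0 (Y_mul_mem_Hy hb))
    (H0.smul_mem _ (X_mul_mem_H0 Y_mem_Hy)))

/-- The submodule `H⁰ + yH⁰ + ⋯ + yᵐ⁻¹H⁰` of `H¹`, spanned by the words of `H¹` with fewer than
`m` leading `y`s. The recursion follows the one defining the n-shuffle product. -/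
noncomputable def yFiltration : ℕ → Submodule ℚ H
  | 0 => ⊥
  | m + 1 => H0 ⊔ (yFiltration m).map (LinearMap.mulLeft ℚ Y)

theorem H0_le_yFiltration_succ (m : ℕ) : H0 ≤ yFiltration (m + 1) :=
  le_sup_left

theorem Y_mul_mem_yFiltration_succ {m : ℕ} {f : H} (hf : f ∈ yFiltration m) :
    Y * f ∈ yFiltration (m + 1) :=
  Submodule.mem_sup_right (Submodule.mem_map_of_mem hf)

theorem mem_yFiltration_succ_iff {m : ℕ} {f : H} :
    f ∈ yFiltration (m + 1) ↔ ∃ c ∈ H0, ∃ g ∈ yFiltration m, c + Y * g = f := by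
  simp [yFiltration, Submodule.mem_sup]

theorem yFiltration_mono : Monotone yFiltration := by
  refine monotone_nat_of_le_succ fun m => ?_
  induction m with
  | zero => exact bot_le
  | succ m ih => exact sup_le_sup_left (Submodule.map_mono ih) _

theorem yFiltration_le_H1 (m : ℕ) : yFiltration m ≤ H1 := by
  induction m with
  | zero => exact bot_le
  | succ m ih =>
    refine sup_le H0_le_H1 (Submodule.map_le_iff_le_comap.2 fun f hf => ?_)
    exact Y_mul_mem_H1 (ih hf)

theorem Y_mul_smodEq {m : ℕ} {f g : H} (h : f ≡ g [SMOD yFiltration m]) :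
    Y * f ≡ Y * g [SMOD yFiltration (m + 1)] :=
  (h.map (LinearMap.mulLeft ℚ Y)).mono le_sup_right

theorem mem_yFiltration_succ_of_smodEq {m : ℕ} {f g : H} (h : f ≡ Y * g [SMOD H0])
    (hg : g ∈ yFiltration m) : f ∈ yFiltration (m + 1) :=
  mem_yFiltration_succ_iff.2 ⟨_, SModEq.sub_mem.1 h, g, hg, sub_add_cancel _ _⟩

theorem Y_pow_mul_mem_yFiltration {c : H} (hc : c ∈ H0) (k : ℕ) :
    Y ^ k * c ∈ yFiltration (k + 1) := by
  induction k with
  | zero => simpa using H0_le_yFiltration_succ 0 hc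
  | succ k ih => rw [pow_succ', mul_assoc]; exact Y_mul_mem_yFiltration_succ ih

theorem nsh_mem_yFiltration {c f : H} {m : ℕ} (hc : c ∈ H0) (hf : f ∈ yFiltration m) :
    nsh c f ∈ yFiltration m := by
  induction m generalizing f with
  | zero =>
    obtain rfl : f = 0 := hf
    rw [nsh_zero_right]
    exact zero_mem _
  | succ m ih =>
    obtain ⟨d, hd, g, hg, rfl⟩ := mem_yFiltration_succ_iff.1 hf
    rw [nsh_add_right]
    exact add_mem (H0_le_yFiltration_succ m (nsh_mem_H0 hc hd))
      (mem_yFiltration_succ_of_smodEq (nsh_Y_mul_smodEq hc (yFiltration_le_H1 m hg)) (ih hg))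

theorem nsh_Y_mem_yFiltration_succ {f : H} {m : ℕ} (hf : f ∈ yFiltration m) :
    nsh Y f ∈ yFiltration (m + 1) := by
  induction m generalizing f with
  | zero =>
    obtain rfl : f = 0 := hf
    rw [nsh_zero_right]
    exact zero_mem _
  | succ m ih =>
    obtain ⟨d, hd, g, hg, rfl⟩ := mem_yFiltration_succ_iff.1 hf
    rw [nsh_add_right]
    exact add_mem
      (mem_yFiltration_succ_of_smodEq (nsh_Y_smodEq hd) (H0_le_yFiltration_succ m hd))
      (mem_yFiltration_succ_of_smodEq (nsh_Y_Y_mul_smodEq (yFiltration_le_H1 m hg))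
        (add_mem (Y_mul_mem_yFiltration_succ hg) (ih hg)))

theorem nsh_Y_pow_smodEq {c : H} (hc : c ∈ H0) (k : ℕ) :
    nsh c (Y ^ k) ≡ Y ^ k * c [SMOD yFiltration k] := by
  induction k with
  | zero => rw [pow_zero, nsh_one_right, one_mul]
  | succ k ih =>
    rw [pow_succ', mul_assoc]
    exact ((nsh_Y_mul_smodEq hc (Y_pow_mem_H1 k)).mono (H0_le_yFiltration_succ k)).trans
      (Y_mul_smodEq ih)

theorem nsh_Y_Y_pow_smodEq (k : ℕ) :
    nsh Y (Y ^ k) ≡ (k + 1 : ℚ) • Y ^ (k + 1) [SMOD yFiltration k] := by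
  induction k with
  | zero => simp [nsh_one_right]
  | succ k ih =>
    calc nsh Y (Y ^ (k + 1))
      _ ≡ Y * (Y ^ (k + 1) + nsh Y (Y ^ k)) [SMOD yFiltration (k + 1)] := by
        rw [pow_succ']
        exact (nsh_Y_Y_mul_smodEq (Y_pow_mem_H1 k)).mono (H0_le_yFiltration_succ k)
      _ ≡ Y * (Y ^ (k + 1) + (k + 1 : ℚ) • Y ^ (k + 1)) [SMOD yFiltration (k + 1)] :=
        Y_mul_smodEq (SModEq.rfl.add ih)
      _ = ((k + 1 : ℕ) + 1 : ℚ) • Y ^ (k + 1 + 1) := by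
        rw [pow_succ' Y (k + 1), mul_add, mul_smul_comm]
        push_cast
        module

theorem nshPow_Y_smodEq (k : ℕ) :
    nshPow k Y ≡ (k.factorial : ℚ) • Y ^ k [SMOD yFiltration k] := by
  induction k with
  | zero => simp [nshPow]
  | succ k ih =>
    calc nshPow (k + 1) Y
      _ ≡ nsh Y ((k.factorial : ℚ) • Y ^ k) [SMOD yFiltration (k + 1)] := by
        rw [SModEq.sub_mem, nshPow, ← nsh_sub_right]
        exact nsh_Y_mem_yFiltration_succ (SModEq.sub_mem.1 ih)
      _ = (k.factorial : ℚ) • nsh Y (Y ^ k) := nsh_smul_right _ _ _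
      _ ≡ (k.factorial : ℚ) • (k + 1 : ℚ) • Y ^ (k + 1) [SMOD yFiltration (k + 1)] :=
        ((nsh_Y_Y_pow_smodEq k).smul _).mono (yFiltration_mono k.le_succ)
      _ = ((k + 1).factorial : ℚ) • Y ^ (k + 1) := by
        rw [smul_smul, Nat.factorial_succ, mul_comm]
        push_cast
        rfl

theorem nsh_nshPow_Y_smodEq {c : H} (hc : c ∈ H0) (k : ℕ) :
    nsh c (nshPow k Y) ≡ Y ^ k * (k.factorial : ℚ) • c [SMOD yFiltration k] :=
  calc nsh c (nshPow k Y)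
    _ ≡ nsh c ((k.factorial : ℚ) • Y ^ k) [SMOD yFiltration k] := by
      rw [SModEq.sub_mem, ← nsh_sub_right]
      exact nsh_mem_yFiltration hc (SModEq.sub_mem.1 (nshPow_Y_smodEq k))
    _ = (k.factorial : ℚ) • nsh c (Y ^ k) := nsh_smul_right _ _ _
    _ ≡ (k.factorial : ℚ) • (Y ^ k * c) [SMOD yFiltration k] := (nsh_Y_pow_smodEq hc k).smul _
    _ = Y ^ k * (k.factorial : ℚ) • c := (mul_smul_comm _ _ _).symm

theorem nsh_nshPow_Y_mem_yFiltration_succ {c : H} (hc : c ∈ H0) (k : ℕ) :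
    nsh c (nshPow k Y) ∈ yFiltration (k + 1) :=
  SModEq.zero.1 <| ((nsh_nshPow_Y_smodEq hc k).mono (yFiltration_mono k.le_succ)).trans <|
    SModEq.zero.2 (Y_pow_mul_mem_yFiltration (H0.smul_mem _ hc) k)

theorem exists_smodEq_Y_pow_mul {k : ℕ} {f : H} (hf : f ∈ yFiltration (k + 1)) :
    ∃ c ∈ H0, f ≡ Y ^ k * c [SMOD yFiltration k] := by
  induction k generalizing f with
  | zero => exact ⟨f, by simpa [yFiltration] using hf, by rw [pow_zero, one_mul]⟩
  | succ k ih =>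
    obtain ⟨d, hd, g, hg, rfl⟩ := mem_yFiltration_succ_iff.1 hf
    obtain ⟨c, hc, hgc⟩ := ih hg
    refine ⟨c, hc, ?_⟩
    rw [pow_succ', mul_assoc, ← zero_add (Y * (Y ^ k * c))]
    exact (SModEq.zero.2 (H0_le_yFiltration_succ k hd)).add (Y_mul_smodEq hgc)

theorem eq_zero_of_Y_mul_mem_H0 {a : H} (ha : Y * a ∈ H0) : a = 0 := by
  obtain ⟨b, -, q, hb⟩ := mem_H0_iff.1 ha
  refine MonoidAlgebra.coeff_eq_zero.1 (Finsupp.ext fun w => ?_)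
  have hXb : (X * b).coeff (.of .y * w) = 0 :=
    MonoidAlgebra.coeff_single_mul_of_forall_mul_ne _ _ fun v h => by
      simpa using congrArg (List.head? ∘ FreeMonoid.toList) h
  have hone : (1 : H).coeff (.of .y * w) = 0 := by
    simp [MonoidAlgebra.one_def]
  calc a.coeff w = (Y * a).coeff (.of .y * w) := by simp [Y, word]
    _ = 0 := by simp [← hb, hXb, hone]

theorem eq_zero_of_Y_pow_mul_mem_yFiltration {k : ℕ} {c : H}
    (h : Y ^ k * c ∈ yFiltration k) : c = 0 := by
  induction k with
  | zero => simpa [yFiltration] using h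
  | succ k ih =>
    obtain ⟨d, hd, g, hg, hdg⟩ := mem_yFiltration_succ_iff.1 h
    have hsub : Y * (Y ^ k * c - g) = d := by
      rw [mul_sub, ← mul_assoc, ← pow_succ', ← hdg, add_sub_cancel_right]
    have hg_eq : Y ^ k * c = g := sub_eq_zero.1 (eq_zero_of_Y_mul_mem_H0 (hsub ▸ hd))
    exact ih (hg_eq ▸ hg)

theorem existsUnique_smodEq_nsh_nshPow_Y {k : ℕ} {f : H} (hf : f ∈ yFiltration (k + 1)) :
    ∃! c, c ∈ H0 ∧ f ≡ nsh c (nshPow k Y) [SMOD yFiltration k] := by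
  have hk : (k.factorial : ℚ) ≠ 0 := mod_cast k.factorial_ne_zero
  obtain ⟨g, hg, hfg⟩ := exists_smodEq_Y_pow_mul hf
  have h_iff {c : H} (hc : c ∈ H0) :
      f ≡ nsh c (nshPow k Y) [SMOD yFiltration k] ↔ (k.factorial : ℚ) • c = g := by
    refine ⟨fun h => ?_, fun h => hfg.trans (h ▸ (nsh_nshPow_Y_smodEq hc k).symm)⟩
    refine sub_eq_zero.1 (eq_zero_of_Y_pow_mul_mem_yFiltration (k := k) ?_)
    rw [mul_sub, ← SModEq.sub_mem]
    exact (nsh_nshPow_Y_smodEq hc k).symm.trans (h.symm.trans hfg)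
  have hg' : (k.factorial : ℚ)⁻¹ • g ∈ H0 := H0.smul_mem _ hg
  refine ⟨(k.factorial : ℚ)⁻¹ • g, ⟨hg', (h_iff hg').2 (smul_inv_smul₀ hk g)⟩, ?_⟩
  rintro c ⟨hc, hfc⟩
  rw [← (h_iff hc).1 hfc, inv_smul_smul₀ hk]

end H

theorem nsh_polynomial_representation_general (m : ℕ) {f : H} (hf : f ∈ yFiltration m) :
    ∃! c : Fin m → H, (∀ i, c i ∈ H0) ∧ f = ∑ i : Fin m, nsh (c i) (nshPow i.1 Y) :=
  existsUnique_sum_of_existsUnique_smodEq (C := H0) (φ := fun k c => nsh c (nshPow k Y))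
    yFiltration_mono rfl (fun k _ hc => nsh_nshPow_Y_mem_yFiltration_succ hc k)
    (fun _ _ hf => existsUnique_smodEq_nsh_nshPow_Y hf) m hf

/-- Every element `yᵐ w` of `H¹` (`m ≥ 0`, `w` a word of `H⁰`) has a unique
representation `yᵐ w = w₀ + w₁ ш̄ y + ⋯ + wₘ ш̄ y^{ш̄ m}` with all `wᵢ ∈ H⁰`;
consequently `(H¹, ш̄) ≃ (H⁰, ш̄)[y]`. -/
theorem nsh_polynomial_representation (m : ℕ) (w : FreeMonoid Letter)
    (hw : word w ∈ H0) :
    ∃! c : Fin (m + 1) → H,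
      (∀ i, c i ∈ H0) ∧
      word (FreeMonoid.ofList (List.replicate m Letter.y) * w) =
        ∑ i : Fin (m + 1), nsh (c i) (nshPow i.1 Y) := by
  rw [← word_mul_word, ← Y_pow_eq_word]
  exact nsh_polynomial_representation_general (m + 1) (Y_pow_mul_mem_yFiltration hw m)
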